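/- Let ξ and η be random vectors taking values in (0,∞)^n. If E[∏ᵢ ξᵢ^{αᵢ}] = E[∏ᵢ ηᵢ^{αᵢ}] < ∞ for all α = (α₁,...,αₙ) in some nonempty open subset of ℝ^n, then ξ and η are identically distributed. -/

import Mathlib

open MeasureTheory Finset

open ProbabilityTheory Filter Topology in
/-- Identity theorem for moment generating functions agreeing near `0`. -/
lemma complexMGF_I_eq {E E' : Type*} [MeasurableSpace E] [MeasurableSpace E']
    (μ : Measure E) (ν : Measure E') (X : E → ℝ) (Y : E' → ℝ)
    (hX : ∀ᶠ s in 𝓝 (0 : ℝ), s ∈ integrableExpSet X μ)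
    (hY : ∀ᶠ s in 𝓝 (0 : ℝ), s ∈ integrableExpSet Y ν)
    (h : ∀ᶠ s in 𝓝 (0 : ℝ), mgf X μ s = mgf Y ν s) :
    complexMGF X μ Complex.I = complexMGF Y ν Complex.I := by
  have hX0 : (0 : ℝ) ∈ interior (integrableExpSet X μ) := mem_interior_iff_mem_nhds.2 hX
  have hY0 : (0 : ℝ) ∈ interior (integrableExpSet Y ν) := mem_interior_iff_mem_nhds.2 hY
  have hconv : Convex ℝ (interior (integrableExpSet X μ) ∩ interior (integrableExpSet Y ν)) :=
    convex_integrableExpSet.interior.inter convex_integrableExpSet.interior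
  have key := AnalyticOnNhd.eqOn_of_preconnected_of_frequently_eq
    (𝕜 := ℂ) (f := complexMGF X μ) (g := complexMGF Y ν)
    (U := {z : ℂ | z.re ∈ interior (integrableExpSet X μ) ∩ interior (integrableExpSet Y ν)})
    (analyticOnNhd_complexMGF.mono fun z hz => hz.1)
    (analyticOnNhd_complexMGF.mono fun z hz => hz.2)
    (hconv.linear_preimage Complex.reLm).isPreconnected
    (z₀ := ((0 : ℝ) : ℂ)) ⟨by simpa using hX0, by simpa using hY0⟩ ?_
  · exact key ⟨by simpa using hX0, by simpa using hY0⟩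
  have h_real : ∃ᶠ (x : ℝ) in 𝓝[≠] 0, complexMGF X μ x = complexMGF Y ν x := by
    refine Eventually.frequently (Eventually.filter_mono nhdsWithin_le_nhds ?_)
    filter_upwards [h] with s hs
    rw [complexMGF_ofReal, complexMGF_ofReal, hs]
  rw [frequently_iff_seq_forall] at h_real ⊢
  obtain ⟨xs, hx_tendsto, hx_eq⟩ := h_real
  refine ⟨fun n ↦ xs n, ?_, fun n ↦ ?_⟩
  · rw [tendsto_nhdsWithin_iff] at hx_tendsto ⊢
    constructor
    · exact (Complex.continuous_ofReal.tendsto 0).comp hx_tendsto.1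
    · simpa using hx_tendsto.2
  · simp [hx_eq]

open ProbabilityTheory Filter Topology in
lemma measure_eq_of_laplace {n : ℕ} (μ ν : Measure (Fin n → ℝ))
    (U : Set (Fin n → ℝ)) (hU : IsOpen U) (hUne : U.Nonempty)
    (hμ : ∀ α ∈ U, Integrable (fun x => Real.exp (∑ i, x i * α i)) μ)
    (hν : ∀ α ∈ U, Integrable (fun x => Real.exp (∑ i, x i * α i)) ν)
    (heq : ∀ α ∈ U, ∫ x, Real.exp (∑ i, x i * α i) ∂μ = ∫ x, Real.exp (∑ i, x i * α i) ∂ν) :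
    μ = ν := by
  obtain ⟨a, ha⟩ := hUne
  set f : (Fin n → ℝ) → ENNReal := fun x => ENNReal.ofReal (Real.exp (∑ i, x i * a i)) with hf
  have hfm : Measurable f := by fun_prop
  have hfin : ∀ x, f x < ⊤ := fun x => ENNReal.ofReal_lt_top
  have hf0 : ∀ x, f x ≠ 0 := fun x => by simp [hf, Real.exp_pos]
  have e (L : StrongDual ℝ (Fin n → ℝ)) (s : ℝ) (x : Fin n → ℝ) :
      (f x).toReal • Real.exp (s * L x)
        = Real.exp (∑ i, x i * (a + s • fun i => L (Pi.single i 1)) i) := by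
    have hL : L x = ∑ i, x i * L (Pi.single i 1) := by
      conv_lhs => rw [pi_eq_sum_univ' x]
      simp [map_sum]
    rw [hf, ENNReal.toReal_ofReal (Real.exp_pos _).le, smul_eq_mul, ← Real.exp_add, hL,
      Finset.mul_sum, ← Finset.sum_add_distrib]
    congr 1
    refine Finset.sum_congr rfl fun i _ => ?_
    simp only [Pi.add_apply, Pi.smul_apply, smul_eq_mul]
    ring
  have hev (L : StrongDual ℝ (Fin n → ℝ)) :
      ∀ᶠ s in 𝓝 (0 : ℝ), (a + s • fun i => L (Pi.single i 1)) ∈ U := by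
    have hc : Continuous fun s : ℝ => (a + s • fun i => L (Pi.single i (1 : ℝ))) := by fun_prop
    exact hc.continuousAt.eventually_mem (hU.mem_nhds (by simpa using ha))
  have hexp (ρ : Measure (Fin n → ℝ))
      (hρ : ∀ α ∈ U, Integrable (fun x => Real.exp (∑ i, x i * α i)) ρ)
      (L : StrongDual ℝ (Fin n → ℝ)) :
      ∀ᶠ s in 𝓝 (0 : ℝ), s ∈ integrableExpSet L (ρ.withDensity f) := by
    filter_upwards [hev L] with s hs
    rw [integrableExpSet, Set.mem_ofPred_eq,
      integrable_withDensity_iff_integrable_smul' hfm (.of_forall hfin)]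
    simp_rw [e]
    exact hρ _ hs
  have hmain : μ.withDensity f = ν.withDensity f := by
    have : IsFiniteMeasure (μ.withDensity f) := isFiniteMeasure_withDensity_ofReal (hμ a ha).2
    have : IsFiniteMeasure (ν.withDensity f) := isFiniteMeasure_withDensity_ofReal (hν a ha).2
    refine Measure.ext_of_charFunDual (funext fun L => ?_)
    have := complexMGF_I_eq _ _ L L (hexp μ hμ L) (hexp ν hν L) ?_
    · simp only [complexMGF] at this
      simp only [charFunDual_apply]
      simpa only [mul_comm] using this
    · filter_upwards [hev L] with s hs
      rw [mgf, mgf, integral_withDensity_eq_integral_toReal_smul hfm (.of_forall hfin),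
        integral_withDensity_eq_integral_toReal_smul hfm (.of_forall hfin)]
      simp_rw [e]
      exact heq _ hs
  rw [← withDensity_inv_same (μ := μ) hfm (.of_forall hf0) (.of_forall fun x => (hfin x).ne),
    hmain, withDensity_inv_same hfm (.of_forall hf0) (.of_forall fun x => (hfin x).ne)]

theorem stmt2 {n : ℕ} {Ω : Type*} [MeasurableSpace Ω] (P : Measure Ω)
    [IsProbabilityMeasure P]
    (ξ η : Ω → Fin n → ℝ) (hξm : Measurable ξ) (hηm : Measurable η)
    (hξpos : ∀ ω i, 0 < ξ ω i) (hηpos : ∀ ω i, 0 < η ω i)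
    (U : Set (Fin n → ℝ)) (hU : IsOpen U) (hUne : U.Nonempty)
    (hint : ∀ α ∈ U, Integrable (fun ω => ∏ i, ξ ω i ^ α i) P ∧
      Integrable (fun ω => ∏ i, η ω i ^ α i) P)
    (heq : ∀ α ∈ U,
      ∫ ω, ∏ i, ξ ω i ^ α i ∂P = ∫ ω, ∏ i, η ω i ^ α i ∂P) :
    Measure.map ξ P = Measure.map η P := by
  have hlog (ζ : Ω → Fin n → ℝ) (hm : Measurable ζ) :
      Measurable (fun ω i => Real.log (ζ ω i)) := by
    refine measurable_pi_lambda _ fun i => ?_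
    exact Real.measurable_log.comp ((measurable_pi_apply i).comp hm)
  have hform (ζ : Ω → Fin n → ℝ) (hp : ∀ ω i, 0 < ζ ω i) (α : Fin n → ℝ) (ω : Ω) :
      Real.exp (∑ i, Real.log (ζ ω i) * α i) = ∏ i, ζ ω i ^ α i := by
    rw [Real.exp_sum]
    exact Finset.prod_congr rfl fun i _ => (Real.rpow_def_of_pos (hp ω i) _).symm
  have hmeas (α : Fin n → ℝ) : Measurable (fun x : Fin n → ℝ => Real.exp (∑ i, x i * α i)) := by
    fun_prop
  have key : Measure.map (fun ω i => Real.log (ξ ω i)) P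
      = Measure.map (fun ω i => Real.log (η ω i)) P := by
    refine measure_eq_of_laplace _ _ U hU hUne (fun α hα => ?_) (fun α hα => ?_) (fun α hα => ?_)
    · rw [integrable_map_measure (hmeas α).aestronglyMeasurable (hlog ξ hξm).aemeasurable]
      simpa only [Function.comp_def, hform ξ hξpos] using (hint α hα).1
    · rw [integrable_map_measure (hmeas α).aestronglyMeasurable (hlog η hηm).aemeasurable]
      simpa only [Function.comp_def, hform η hηpos] using (hint α hα).2
    · rw [integral_map (hlog ξ hξm).aemeasurable (hmeas α).aestronglyMeasurable,
        integral_map (hlog η hηm).aemeasurable (hmeas α).aestronglyMeasurable]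
      simpa only [hform ξ hξpos, hform η hηpos] using heq α hα
  have hem : Measurable (fun (x : Fin n → ℝ) i => Real.exp (x i)) := by fun_prop
  have := congrArg (Measure.map (fun (x : Fin n → ℝ) i => Real.exp (x i))) key
  rw [Measure.map_map hem (hlog ξ hξm), Measure.map_map hem (hlog η hηm)] at this
  simpa only [Function.comp_def, Real.exp_log (hξpos _ _), Real.exp_log (hηpos _ _)] using this
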